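/- Let k be an algebraically closed field and r ≥ 2 an integer. The set A ⊆ W_{r,2} × W_{r,2} of pairs (F_1, F_2) of quadratic forms such that some nonzero linear form L divides both F_1 and F_2 (equivalently, F_1 and F_2 both vanish on a common hyperplane of ℙ^r) is a Zariski closed irreducible subset of codimension r^2 in W_{r,2} × W_{r,2}. -/

import Mathlib

open MvPolynomial

noncomputable section

variable (K : Type*) [Field K] (M : Type*) [AddCommGroup M] [Module K M]

/-- Evaluation of a polynomial in the linear functionals of `M` at a point `v : M`.
These are precisely the polynomial functions on the affine space `M`. -/
def polyEval (p : MvPolynomial (M →ₗ[K] K) K) (v : M) : K :=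
  MvPolynomial.eval (fun φ : M →ₗ[K] K => φ v) p

lemma polyEval_mul (p q : MvPolynomial (M →ₗ[K] K) K) (v : M) :
    polyEval K M (p * q) v = polyEval K M p v * polyEval K M q v :=
  map_mul (MvPolynomial.eval fun φ : M →ₗ[K] K => φ v) p q

/-- The collection of Zariski-closed subsets of the affine space `M`:
common zero loci of families of polynomial functions. -/
def zariskiCloseds : Set (Set M) :=
  {s | ∃ S : Set (MvPolynomial (M →ₗ[K] K) K), s = {v | ∀ p ∈ S, polyEval K M p v = 0}}

/-- The Zariski topology on an affine space (vector space) `M` over `K`. -/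
def zariskiTopology : TopologicalSpace M := by
  refine TopologicalSpace.ofClosed (zariskiCloseds K M) ⟨{1}, ?_⟩ ?_ ?_
  · ext v
    simp [polyEval]
  · intro A hA
    choose S hS using fun a : A => hA a.2
    refine ⟨⋃ a : A, S a, ?_⟩
    ext v
    simp only [Set.mem_sInter, Set.mem_setOf_eq, Set.mem_iUnion]
    constructor
    · rintro h p ⟨a, hp⟩
      have := h a a.2
      rw [hS a] at this
      exact this p hp
    · intro h t ht
      have : v ∈ {w | ∀ p ∈ S ⟨t, ht⟩, polyEval K M p w = 0} :=
        fun p hp => h p ⟨⟨t, ht⟩, hp⟩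
      rw [← hS ⟨t, ht⟩] at this
      exact this
  · rintro s ⟨S₁, rfl⟩ t ⟨S₂, rfl⟩
    refine ⟨Set.image2 (· * ·) S₁ S₂, ?_⟩
    ext v
    simp only [Set.mem_union, Set.mem_setOf_eq]
    constructor
    · rintro (h | h) p ⟨p₁, h₁, p₂, h₂, rfl⟩
      · show polyEval K M (p₁ * p₂) v = 0
        rw [polyEval_mul, h p₁ h₁, zero_mul]
      · show polyEval K M (p₁ * p₂) v = 0
        rw [polyEval_mul, h p₂ h₂, mul_zero]
    · intro h
      by_contra hc
      push_neg at hc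
      obtain ⟨⟨p₁, h₁, hv₁⟩, ⟨p₂, h₂, hv₂⟩⟩ := hc
      have h12 := h (p₁ * p₂) ⟨p₁, h₁, p₂, h₂, rfl⟩
      rw [polyEval_mul] at h12
      exact mul_ne_zero hv₁ hv₂ h12

/-- The dimension of a subset of affine space: the Krull dimension of its Zariski closure. -/
def dimSet {M : Type*} [TopologicalSpace M] (s : Set M) : WithBot ℕ∞ :=
  topologicalKrullDim ↥(closure s)

/-- `vdimGE r n F m` says that the common projective vanishing locus
`V(F 0, …, F (n-1)) ⊆ ℙ^r` has dimension at least `m` (with `dim ∅ = -∞`).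
This is encoded via the Krull dimension of the homogeneous coordinate ring of the
affine cone: `dim V(F) ≥ m` iff the cone has Krull dimension at least `max m 0 + 1`. -/
def vdimGE {K : Type*} [Field K] (r n : ℕ) (F : Fin n → MvPolynomial (Fin (r + 1)) K)
    (m : ℤ) : Prop :=
  ((m.toNat + 1 : ℕ) : WithBot ℕ∞) ≤
    ringKrullDim (MvPolynomial (Fin (r + 1)) K ⧸ Ideal.span (Set.range F))

end

noncomputable section Statement12

open MvPolynomial

variable (K : Type*) [Field K]

/-- The affine space `W_{r,2} × W_{r,2}` of pairs of quadratic forms in `x_0, …, x_r`. -/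
abbrev pairSpace (r : ℕ) : Type _ :=
  ↥(homogeneousSubmodule (Fin (r + 1)) K 2) × ↥(homogeneousSubmodule (Fin (r + 1)) K 2)

/-- The Zariski topology on the affine space of pairs of quadratic forms. -/
instance (r : ℕ) : TopologicalSpace (pairSpace K r) := zariskiTopology K _

/-!
Closedness is elimination theory. A linear form `l` divides a polynomial `F` iff `F` vanishes on the
hyperplane `l = 0`, and since this hyperplane is filled by the points `(u ⬝ᵥ l) • v - (v ⬝ᵥ l) • u`,
this is a system of homogeneous equations in `l`, linear in `F`. If such a system has no nonzero
solution for a given `F`, then by the Nullstellensatz its equations generate all monomials of some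
degree `D`, a condition which the nonvanishing of a determinant of coefficients keeps true near `F`.

The pairs `(l * b, l * c)` in which `l` has leading coefficient `1` are dense in the locus, which is
thus the closure of the image of an affine space of dimension `r + 2 * (r + 1)` under a polynomial
map, hence irreducible. Its dimension is the transcendence degree of the image of the comorphism.
All coordinates of `l`, `b` and `c` are algebraic over this image: the products `l * b` and `l * c`
determine the unordered pair of roots `l j * b 0`, `b j` of a quadratic polynomial, and likewise
with `c`. Hence no dimension is lost, and `r + 2 * (r + 1) = 2 * (r + 2).choose 2 - r ^ 2`.
-/

variable {K}

section KrullDimension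

theorem ringKrullDim_eq_of_isIntegral (R S : Type*) [CommRing R] [CommRing S] [Algebra R S]
    [Algebra.IsIntegral R S] [FaithfulSMul R S] : ringKrullDim S = ringKrullDim R := by
  apply le_antisymm
  · exact Order.krullDim_le_of_strictMono (PrimeSpectrum.comap (algebraMap R S))
      fun p q (hpq : p.asIdeal < q.asIdeal) => Ideal.IsIntegral.comap_lt_comap hpq
  · refine iSup_le fun chain => ?_
    obtain ⟨⟨Q, hQ, hQ_over⟩⟩ := Ideal.nonempty_primesOver (S := S) chain.head.asIdeal
    obtain ⟨lift, length_lift, -⟩ := Ideal.exists_ltSeries_of_hasGoingUp (S := S) chain Q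
    rw [← length_lift]
    exact Order.LTSeries.length_le_krullDim lift

theorem ringKrullDim_eq_trdeg (K S : Type*) [Field K] [CommRing S] [IsDomain S] [Algebra K S]
    [Algebra.FiniteType K S] : ringKrullDim S = (Cardinal.toNat (Algebra.trdeg K S) : ℕ) := by
  obtain ⟨n, g, g_injective, g_integral⟩ := exists_integral_inj_algHom_of_fg K S
  let := g.toRingHom.toAlgebra
  have : Algebra.IsIntegral (MvPolynomial (Fin n) K) S := ⟨g_integral⟩
  have : IsScalarTower K (MvPolynomial (Fin n) K) S :=
    IsScalarTower.of_algebraMap_eq fun x => (g.commutes x).symm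
  have : FaithfulSMul (MvPolynomial (Fin n) K) S :=
    (faithfulSMul_iff_algebraMap_injective _ _).2 g_injective
  have trdeg_eq := lift_trdeg_add_eq K (MvPolynomial (Fin n) K) S
  rw [trdeg_eq_zero (R := MvPolynomial (Fin n) K) (A := S), MvPolynomial.trdeg_of_isDomain]
    at trdeg_eq
  have trdeg_eq' : Algebra.trdeg K S = n := by simpa using trdeg_eq.symm
  rw [ringKrullDim_eq_of_isIntegral (MvPolynomial (Fin n) K),
    MvPolynomial.ringKrullDim_of_isNoetherianRing, trdeg_eq']
  simp

theorem trdeg_subalgebra_of_isAlgebraic {A : Type*} [CommRing A] [IsDomain A] [Algebra K A]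
    (S : Subalgebra K A) [Algebra.IsAlgebraic S A] : Algebra.trdeg K S = Algebra.trdeg K A := by
  rw [← trdeg_add_eq K S (A := A), trdeg_eq_zero (R := S) (A := A), add_zero]

theorem isAlgebraic_mvPolynomial_of_forall_X {σ : Type*} (S : Subalgebra K (MvPolynomial σ K))
    (h : ∀ i, IsAlgebraic S (X i : MvPolynomial σ K)) :
    Algebra.IsAlgebraic S (MvPolynomial σ K) where
  isAlgebraic p := by
    induction p using MvPolynomial.induction_on with
    | C a => exact isAlgebraic_algebraMap (algebraMap K S a)
    | add p q hp hq => exact hp.add hq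
    | mul_X p i hp => exact hp.mul (h i)

end KrullDimension

section JacobsonSpace

theorem closure_image_preimage_of_closedPoints_subset_range {X Y : Type*} [TopologicalSpace Y]
    [JacobsonSpace Y] {f : X → Y} (hrange : closedPoints Y ⊆ Set.range f) {Z : Set Y}
    (hZ : IsClosed Z) :
    closure (f '' (f ⁻¹' Z)) = Z := by
  rw [Set.image_preimage_eq_inter_range]
  refine subset_antisymm (closure_minimal Set.inter_subset_left hZ) ?_
  calc Z = closure Z := hZ.closure_eq.symm
    _ = closure (Z ∩ closedPoints Y) :=
      (JacobsonSpace.closure_inter_closedPoints_eq_closure hZ.isLocallyClosed).symm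
    _ ⊆ closure (Z ∩ Set.range f) := closure_mono (Set.inter_subset_inter_right _ hrange)

variable {X Y : Type*} [TopologicalSpace X] [TopologicalSpace Y] {f : X → Y}

theorem isIrreducible_preimage_of_isInducing (hf : Topology.IsInducing f) {Z : Set Y}
    (hZ : IsIrreducible (f '' (f ⁻¹' Z))) : IsIrreducible (f ⁻¹' Z) := by
  refine ⟨Set.image_nonempty.1 hZ.1, fun U V hU hV ⟨x, hxZ, hxU⟩ ⟨y, hyZ, hyV⟩ => ?_⟩
  obtain ⟨U', hU', rfl⟩ := hf.isOpen_iff.1 hU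
  obtain ⟨V', hV', rfl⟩ := hf.isOpen_iff.1 hV
  obtain ⟨_, ⟨z, hzZ, rfl⟩, hzUV⟩ := hZ.2 U' V' hU' hV' ⟨f x, ⟨x, hxZ, rfl⟩, hxU⟩
    ⟨f y, ⟨y, hyZ, rfl⟩, hyV⟩
  exact ⟨z, hzZ, hzUV⟩

theorem topologicalKrullDim_eq_of_closedPoints_subset_range [JacobsonSpace Y]
    (hf : Topology.IsInducing f) (hrange : closedPoints Y ⊆ Set.range f) :
    topologicalKrullDim X = topologicalKrullDim Y := by
  have closure_eq (Z : TopologicalSpace.IrreducibleCloseds Y) :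
      closure (f '' (f ⁻¹' (Z : Set Y))) = Z :=
    closure_image_preimage_of_closedPoints_subset_range hrange Z.isClosed
  have irreducible_preimage (Z : TopologicalSpace.IrreducibleCloseds Y) :
      IsIrreducible (f ⁻¹' (Z : Set Y)) := by
    refine isIrreducible_preimage_of_isInducing hf ?_
    rw [← isIrreducible_iff_closure, closure_eq]
    exact Z.isIrreducible
  let pullback (Z : TopologicalSpace.IrreducibleCloseds Y) :
      TopologicalSpace.IrreducibleCloseds X :=
    ⟨f ⁻¹' Z, irreducible_preimage Z, Z.isClosed.preimage hf.continuous⟩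
  have pullback_mono : Monotone pullback := fun Z W (hZW : (Z : Set Y) ⊆ W) =>
    Set.preimage_mono (f := f) hZW
  have pullback_injective : Function.Injective pullback := fun Z W hZW => by
    have preimage_eq : f ⁻¹' (Z : Set Y) = f ⁻¹' (W : Set Y) := congrArg SetLike.coe hZW
    exact TopologicalSpace.IrreducibleCloseds.ext
      (by rw [← closure_eq Z, preimage_eq, closure_eq W])
  exact le_antisymm hf.topologicalKrullDim_le
    (Order.krullDim_le_of_strictMono pullback
      (pullback_mono.strictMono_of_injective pullback_injective))

end JacobsonSpace

theorem exists_algHom_ker_eq_of_isMaximal [IsAlgClosed K] {R : Type*} [CommRing R] [Algebra K R]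
    [Algebra.FiniteType K R] (m : Ideal R) [m.IsMaximal] :
    ∃ χ : R →ₐ[K] K, RingHom.ker χ = m := by
  let : Field (R ⧸ m) := Ideal.Quotient.field m
  have : Module.Finite K (R ⧸ m) := finite_of_finite_type_of_isJacobsonRing K _
  let residueField : K ≃ₐ[K] R ⧸ m := AlgEquiv.ofBijective (Algebra.ofId _ _)
    IsAlgClosed.algebraMap_bijective_of_isIntegral
  refine ⟨residueField.symm.toAlgHom.comp (Ideal.Quotient.mkₐ K m), ?_⟩
  ext a
  simp [Ideal.Quotient.eq_zero_iff_mem]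

section ZariskiTopology

variable {M : Type*} [AddCommGroup M] [Module K M]

/-- The given topology on the `K`-vector space `M` is its Zariski topology. This is a predicate
on a topology because `zariskiTopology K M` cannot be an instance: `M` does not determine `K`. -/
class IsZariskiTopology (K M : Type*) [Field K] [AddCommGroup M] [Module K M]
    [t : TopologicalSpace M] : Prop where
  eq_zariskiTopology : t = zariskiTopology K M

/-- Evaluation of polynomial functions on the affine space `M` at the point `v`. -/
def polyEvalHom (v : M) : MvPolynomial (M →ₗ[K] K) K →ₐ[K] K :=
  aeval fun φ => φ v

theorem polyEvalHom_apply (v : M) (p : MvPolynomial (M →ₗ[K] K) K) :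
    polyEvalHom v p = polyEval K M p v :=
  congrFun (congrArg DFunLike.coe (coe_aeval_eq_eval _)) p

variable (K) in
/-- The ideal of the polynomial functions on the affine space `M` that vanish on `s`. -/
def zariskiIdeal (s : Set M) : Ideal (MvPolynomial (M →ₗ[K] K) K) :=
  ⨅ v ∈ s, RingHom.ker (polyEvalHom v)

theorem mem_zariskiIdeal {s : Set M} {p : MvPolynomial (M →ₗ[K] K) K} :
    p ∈ zariskiIdeal K s ↔ ∀ v ∈ s, polyEval K M p v = 0 := by
  simp only [zariskiIdeal, Submodule.mem_iInf, RingHom.mem_ker, polyEvalHom_apply]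

variable (K) in
/-- The coordinate ring of the Zariski closure of `s`. -/
abbrev CoordinateRing (s : Set M) : Type _ :=
  MvPolynomial (M →ₗ[K] K) K ⧸ zariskiIdeal K s

variable (K) in
/-- The linear functionals on `M`, as elements of the coordinate ring. -/
def coordinateFunction (s : Set M) : (M →ₗ[K] K) →ₗ[K] CoordinateRing K s where
  toFun φ := Ideal.Quotient.mk _ (X φ)
  map_add' φ ψ := by
    rw [← map_add, Ideal.Quotient.eq, mem_zariskiIdeal]
    simp [polyEval]
  map_smul' c φ := by
    rw [RingHom.id_apply, ← Ideal.Quotient.mkₐ_eq_mk K, ← map_smul, Ideal.Quotient.mkₐ_eq_mk,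
      Ideal.Quotient.eq, mem_zariskiIdeal]
    simp [polyEval]

theorem adjoin_range_coordinateFunction (s : Set M) :
    Algebra.adjoin K (Set.range (coordinateFunction K s)) = ⊤ := by
  have range_eq : Set.range (coordinateFunction K s) =
      Ideal.Quotient.mkₐ K (zariskiIdeal K s) '' Set.range X := by
    rw [← Set.range_comp]
    rfl
  rw [range_eq, ← AlgHom.map_adjoin, adjoin_range_X, Algebra.map_top,
    AlgHom.range_eq_top]
  exact Ideal.Quotient.mkₐ_surjective K _

instance finiteType_coordinateRing [Module.Finite K M] (s : Set M) :
    Algebra.FiniteType K (CoordinateRing K s) := by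
  obtain ⟨t, ht⟩ : (LinearMap.range (coordinateFunction K s)).FG := Submodule.FG.of_finite
  refine ⟨⟨t, ?_⟩⟩
  rw [← Algebra.adjoin_span (R := K), ht, LinearMap.coe_range, adjoin_range_coordinateFunction]

variable [TopologicalSpace M] [IsZariskiTopology K M] {s : Set M}

theorem isClosed_iff_mem_zariskiCloseds : IsClosed s ↔ s ∈ zariskiCloseds K M := by
  obtain rfl := IsZariskiTopology.eq_zariskiTopology (K := K) (M := M)
  rw [← @isOpen_compl_iff _ _ (zariskiTopology K M)]
  change sᶜᶜ ∈ zariskiCloseds K M ↔ _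
  rw [compl_compl]

theorem isClosed_setOf_polyEval_eq_zero (S : Set (MvPolynomial (M →ₗ[K] K) K)) :
    IsClosed {v | ∀ p ∈ S, polyEval K M p v = 0} :=
  (isClosed_iff_mem_zariskiCloseds (K := K)).2 ⟨S, rfl⟩

variable (K) in
theorem mem_closure_iff_forall_mem_zariskiIdeal {v : M} :
    v ∈ closure s ↔ ∀ p ∈ zariskiIdeal K s, polyEval K M p v = 0 := by
  constructor
  · have s_subset : s ⊆ {v | ∀ p ∈ (zariskiIdeal K s : Set _), polyEval K M p v = 0} :=
      fun w hw q hq => mem_zariskiIdeal.1 hq w hw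
    exact fun hv => closure_minimal s_subset (isClosed_setOf_polyEval_eq_zero _) hv
  · intro hv
    obtain ⟨S, hS⟩ := (isClosed_iff_mem_zariskiCloseds (K := K)).1 (isClosed_closure (s := s))
    rw [hS]
    refine fun p hp => hv p (mem_zariskiIdeal.2 fun w hw => ?_)
    have hw' : w ∈ closure s := subset_closure hw
    rw [hS] at hw'
    exact hw' p hp

variable (K) in
theorem isIrreducible_of_isPrime_zariskiIdeal (h : (zariskiIdeal K s).IsPrime) :
    IsIrreducible s := by
  have s_nonempty : s.Nonempty := by
    rw [Set.nonempty_iff_ne_empty]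
    rintro rfl
    exact h.ne_top (by simp [zariskiIdeal])
  refine ⟨s_nonempty, isPreirreducible_iff_isClosed_union_isClosed.2 ?_⟩
  intro Z₁ Z₂ hZ₁ hZ₂ hs
  obtain ⟨S₁, rfl⟩ := (isClosed_iff_mem_zariskiCloseds (K := K)).1 hZ₁
  obtain ⟨S₂, rfl⟩ := (isClosed_iff_mem_zariskiCloseds (K := K)).1 hZ₂
  by_contra! hnot
  obtain ⟨⟨v, hv, hv'⟩, w, hw, hw'⟩ := And.imp Set.not_subset.1 Set.not_subset.1 hnot
  simp only [Set.mem_ofPred_eq, not_forall] at hv' hw'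
  obtain ⟨p, hp, hpv⟩ := hv'
  obtain ⟨q, hq, hqw⟩ := hw'
  have hpq : p * q ∈ zariskiIdeal K s := mem_zariskiIdeal.2 fun u hu => by
    rw [polyEval_mul]
    exact mul_eq_zero.2 ((hs hu).imp (fun hu₁ => hu₁ p hp) fun hu₂ => hu₂ q hq)
  rcases h.mem_or_mem hpq with hp' | hq'
  · exact hpv (mem_zariskiIdeal.1 hp' v hv)
  · exact hqw (mem_zariskiIdeal.1 hq' w hw)

variable (K) in
/-- The character of the coordinate ring given by evaluation at a point of the closure. -/
def evalCoordinateRing (v : closure s) : CoordinateRing K s →ₐ[K] K :=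
  Ideal.Quotient.liftₐ (zariskiIdeal K s) (polyEvalHom v.1) fun p hp => by
    rw [polyEvalHom_apply, (mem_closure_iff_forall_mem_zariskiIdeal K).1 v.2 p hp]

theorem evalCoordinateRing_mk (v : closure s) (p : MvPolynomial (M →ₗ[K] K) K) :
    evalCoordinateRing K v (Ideal.Quotient.mk _ p) = polyEval K M p v :=
  polyEvalHom_apply v.1 p

theorem evalCoordinateRing_surjective [Module.Finite K M] :
    Function.Surjective (evalCoordinateRing K (s := s)) := by
  intro χ
  let v : M := (Module.evalEquiv K M).symm (χ.toLinearMap ∘ₗ coordinateFunction K s)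
  have polyEvalHom_eq : polyEvalHom v = χ.comp (Ideal.Quotient.mkₐ K (zariskiIdeal K s)) := by
    ext φ
    rw [polyEvalHom, aeval_X]
    exact Module.apply_evalEquiv_symm_apply K M φ _
  have hv : v ∈ closure s := by
    refine (mem_closure_iff_forall_mem_zariskiIdeal K).2 fun p hp => ?_
    rw [← polyEvalHom_apply, polyEvalHom_eq, AlgHom.comp_apply, Ideal.Quotient.mkₐ_eq_mk,
      Ideal.Quotient.eq_zero_iff_mem.2 hp, map_zero]
  refine ⟨⟨v, hv⟩, Ideal.Quotient.algHom_ext _ ?_⟩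
  rw [← polyEvalHom_eq]
  ext φ
  rfl

variable (K) in
/-- The map sending a point of the closure of `s` to the corresponding maximal ideal of the
coordinate ring. -/
def toPrimeSpectrum (v : closure s) : PrimeSpectrum (CoordinateRing K s) :=
  ⟨RingHom.ker (evalCoordinateRing K v), RingHom.ker_isPrime _⟩

theorem preimage_toPrimeSpectrum_zeroLocus (S : Set (CoordinateRing K s)) :
    toPrimeSpectrum K ⁻¹' PrimeSpectrum.zeroLocus S =
      ((↑) : closure s → M) ⁻¹' {v | ∀ p ∈ Ideal.Quotient.mk (zariskiIdeal K s) ⁻¹' S,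
        polyEval K M p v = 0} := by
  ext v
  simp only [toPrimeSpectrum, Set.mem_preimage, PrimeSpectrum.mem_zeroLocus, Set.subset_def,
    SetLike.mem_coe, RingHom.mem_ker, Set.mem_ofPred_eq, Ideal.Quotient.mk_surjective.forall,
    evalCoordinateRing_mk]

variable (K) in
theorem isInducing_toPrimeSpectrum : Topology.IsInducing (toPrimeSpectrum K (s := s)) := by
  refine ⟨TopologicalSpace.ext_isClosed fun Z => ?_⟩
  rw [isClosed_induced_iff, isClosed_induced_iff]
  constructor
  · rintro ⟨W, hW, rfl⟩
    obtain ⟨S, rfl⟩ := (isClosed_iff_mem_zariskiCloseds (K := K)).1 hW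
    refine ⟨_, PrimeSpectrum.isClosed_zeroLocus (Ideal.Quotient.mk (zariskiIdeal K s) '' S), ?_⟩
    ext v
    simp only [toPrimeSpectrum, Set.mem_preimage, PrimeSpectrum.mem_zeroLocus, Set.subset_def,
      SetLike.mem_coe, RingHom.mem_ker, Set.mem_ofPred_eq, Set.forall_mem_image,
      evalCoordinateRing_mk]
  · rintro ⟨W, hW, rfl⟩
    obtain ⟨S, rfl⟩ := (PrimeSpectrum.isClosed_iff_zeroLocus _).1 hW
    exact ⟨_, isClosed_setOf_polyEval_eq_zero _, (preimage_toPrimeSpectrum_zeroLocus S).symm⟩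

theorem closedPoints_subset_range_toPrimeSpectrum [IsAlgClosed K] [Module.Finite K M] :
    closedPoints (PrimeSpectrum (CoordinateRing K s)) ⊆ Set.range (toPrimeSpectrum K) := by
  intro m hm
  rw [mem_closedPoints_iff, PrimeSpectrum.isClosed_singleton_iff_isMaximal] at hm
  obtain ⟨χ, hχ⟩ := exists_algHom_ker_eq_of_isMaximal (K := K) m.asIdeal
  obtain ⟨v, rfl⟩ := evalCoordinateRing_surjective χ
  exact ⟨v, PrimeSpectrum.ext hχ⟩

variable (K) in
theorem dimSet_eq_ringKrullDim_coordinateRing [IsAlgClosed K] [Module.Finite K M] (s : Set M) :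
    dimSet s = ringKrullDim (CoordinateRing K s) := by
  have : IsJacobsonRing (CoordinateRing K s) := isJacobsonRing_of_finiteType (A := K)
  rw [← PrimeSpectrum.topologicalKrullDim_eq_ringKrullDim]
  exact topologicalKrullDim_eq_of_closedPoints_subset_range (isInducing_toPrimeSpectrum K)
    closedPoints_subset_range_toPrimeSpectrum

end ZariskiTopology

section PolynomialMap

variable {M N P : Type*} [AddCommGroup M] [Module K M] [AddCommGroup N] [Module K N]
  [AddCommGroup P] [Module K P] {σ τ : Type*}

/-- A map from coordinate space to a `K`-vector space is polynomial if its composition with every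
linear functional is given by a polynomial. -/
def IsPolynomialMap (f : (σ → K) → M) : Prop :=
  ∀ φ : M →ₗ[K] K, ∃ q : MvPolynomial σ K, ∀ s, eval s q = φ (f s)

namespace IsPolynomialMap

theorem eval_pi [Finite τ] (p : τ → MvPolynomial σ K) :
    IsPolynomialMap fun s i => eval s (p i) := by
  classical
  cases nonempty_fintype τ
  intro φ
  refine ⟨∑ i, p i * C (φ fun j => if i = j then 1 else 0), fun s => ?_⟩
  rw [φ.pi_apply_eq_sum_univ]
  simp

theorem prodMk {f : (σ → K) → M} {g : (σ → K) → N} (hf : IsPolynomialMap f)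
    (hg : IsPolynomialMap g) : IsPolynomialMap fun s => (f s, g s) := by
  intro φ
  obtain ⟨p, hp⟩ := hf (φ ∘ₗ LinearMap.inl K M N)
  obtain ⟨q, hq⟩ := hg (φ ∘ₗ LinearMap.inr K M N)
  refine ⟨p + q, fun s => ?_⟩
  rw [map_add, hp, hq, LinearMap.comp_apply, LinearMap.comp_apply, ← map_add]
  simp

theorem bilinear [Module.Finite K M] {f : (σ → K) → M} {g : (σ → K) → N}
    (hf : IsPolynomialMap f) (hg : IsPolynomialMap g) (B : M →ₗ[K] N →ₗ[K] P) :
    IsPolynomialMap fun s => B (f s) (g s) := by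
  intro φ
  let b := Module.finBasis K M
  choose p hp using fun i => hf (b.coord i)
  choose q hq using fun i => hg (φ ∘ₗ B (b i))
  refine ⟨∑ i, p i * q i, fun s => ?_⟩
  dsimp only
  conv_rhs => rw [← b.sum_repr (f s), map_sum, LinearMap.sum_apply, map_sum]
  simp [hp, hq]

/-- The homomorphism `p ↦ p ∘ f` on polynomial functions induced by a polynomial map `f`. -/
def comorphism {f : (σ → K) → M} (hf : IsPolynomialMap f) :
    MvPolynomial (M →ₗ[K] K) K →ₐ[K] MvPolynomial σ K :=
  aeval fun φ => (hf φ).choose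

variable {f : (σ → K) → M}

theorem eval_comorphism (hf : IsPolynomialMap f) (p : MvPolynomial (M →ₗ[K] K) K) (s : σ → K) :
    eval s (hf.comorphism p) = polyEval K M p (f s) := by
  have algHom_eq : (aeval s).comp hf.comorphism = polyEvalHom (f s) := by
    ext φ
    simp [comorphism, polyEvalHom, (hf φ).choose_spec, aeval_eq_eval]
  rw [← polyEvalHom_apply, ← algHom_eq, AlgHom.comp_apply, aeval_eq_eval]

theorem mem_range_comorphism [Infinite K] (hf : IsPolynomialMap f) {φ : M →ₗ[K] K}
    {q : MvPolynomial σ K} (hq : ∀ s, eval s q = φ (f s)) : q ∈ hf.comorphism.range :=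
  ⟨X φ, MvPolynomial.funext fun s => by simp [hf.eval_comorphism, hq, polyEval]⟩

theorem ker_comorphism [Infinite K] (hf : IsPolynomialMap f) :
    RingHom.ker hf.comorphism = zariskiIdeal K (Set.range f) := by
  ext p
  rw [RingHom.mem_ker, mem_zariskiIdeal, Set.forall_mem_range, MvPolynomial.funext_iff]
  simp only [hf.eval_comorphism, map_zero]

theorem isIrreducible_range [Infinite K] [TopologicalSpace M] [IsZariskiTopology K M]
    (hf : IsPolynomialMap f) : IsIrreducible (Set.range f) :=
  isIrreducible_of_isPrime_zariskiIdeal K (hf.ker_comorphism ▸ RingHom.ker_isPrime _)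

theorem dimSet_range [IsAlgClosed K] [Module.Finite K M] [TopologicalSpace M]
    [IsZariskiTopology K M] [Fintype σ] (hf : IsPolynomialMap f)
    [Algebra.IsAlgebraic hf.comorphism.range (MvPolynomial σ K)] :
    dimSet (Set.range f) = Fintype.card σ := by
  have : Infinite K := IsAlgClosed.instInfinite
  have coordinateRing_equiv : CoordinateRing K (Set.range f) ≃ₐ[K] hf.comorphism.range :=
    (Ideal.quotientEquivAlgOfEq K hf.ker_comorphism.symm).trans
      (Ideal.quotientKerEquivRange hf.comorphism)
  have : Algebra.FiniteType K hf.comorphism.range :=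
    Algebra.FiniteType.equiv inferInstance coordinateRing_equiv
  rw [dimSet_eq_ringKrullDim_coordinateRing K,
    ringKrullDim_eq_of_ringEquiv coordinateRing_equiv.toRingEquiv, ringKrullDim_eq_trdeg K,
    trdeg_subalgebra_of_isAlgebraic, MvPolynomial.trdeg_of_isDomain]
  simp

theorem mem_closure_of_forall_eval_ne_zero [Infinite K] [TopologicalSpace M]
    [IsZariskiTopology K M] (hf : IsPolynomialMap f) {Z : Set M} {g : MvPolynomial σ K}
    (hg : g ≠ 0) (hZ : ∀ s, eval s g ≠ 0 → f s ∈ Z) (s : σ → K) : f s ∈ closure Z := by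
  refine (mem_closure_iff_forall_mem_zariskiIdeal K).2 fun p hp => ?_
  have mul_eq_zero : hf.comorphism p * g = 0 := by
    refine MvPolynomial.funext fun t => ?_
    by_cases ht : eval t g = 0
    · simp [ht]
    · simp [hf.eval_comorphism, mem_zariskiIdeal.1 hp _ (hZ t ht)]
  rw [← hf.eval_comorphism, (mul_eq_zero_iff_right hg).1 mul_eq_zero, map_zero]

end IsPolynomialMap

end PolynomialMap

section Elimination

variable {M : Type*} [AddCommGroup M] [Module K M] {σ ι : Type*}

theorem homogeneousComponent_mul_of_isHomogeneous {p : MvPolynomial σ K} {m : ℕ}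
    (hp : p.IsHomogeneous m) (q : MvPolynomial σ K) (d : ℕ) :
    homogeneousComponent d (q * p) = if m ≤ d then homogeneousComponent (d - m) q * p else 0 := by
  let := gradedAlgebra (σ := σ) (R := K)
  have coe_decompose (f : MvPolynomial σ K) (n : ℕ) :
      (DirectSum.decompose (homogeneousSubmodule σ K) f n : MvPolynomial σ K) =
        homogeneousComponent n f := decomposition.decompose'_apply f n
  rw [← coe_decompose, ← coe_decompose]
  exact DirectSum.coe_decompose_mul_of_right_mem (homogeneousSubmodule σ K) d hp

theorem exists_forall_monomial_mem_span [IsAlgClosed K] [Finite σ] (E : ι → MvPolynomial σ K)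
    (hE : ∀ l, (∀ k, eval l (E k) = 0) → l = 0) :
    ∃ D, ∀ α : σ →₀ ℕ, α.degree = D → monomial α (1 : K) ∈ Ideal.span (Set.range E) := by
  have idealOfVars_le : idealOfVars σ K ≤ (Ideal.span (Set.range E)).radical := by
    rw [← vanishingIdeal_zeroLocus_eq_radical (K := K), Ideal.span_le]
    rintro _ ⟨i, rfl⟩ l hl
    have l_eq_zero : l = 0 := hE l fun k => by
      simpa [aeval_eq_eval] using hl (E k) (Ideal.subset_span ⟨k, rfl⟩)
    simp [l_eq_zero]
  obtain ⟨D, hD⟩ := Ideal.exists_pow_le_of_le_radical_of_fg_radical idealOfVars_le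
    (IsNoetherian.noetherian _)
  exact ⟨D, fun α hα => hD ((monomial_mem_pow_idealOfVars_iff _ _ one_ne_zero).2 hα.ge)⟩

theorem exists_linearMap_of_mem_span {E : ι → M →ₗ[K] MvPolynomial σ K} {e : ι → ℕ}
    (hE : ∀ k v, (E k v).IsHomogeneous (e k)) {w : M} {p : MvPolynomial σ K} {D : ℕ}
    (hp : p.IsHomogeneous D) (hpE : p ∈ Ideal.span (Set.range fun k => E k w)) :
    ∃ T : M →ₗ[K] MvPolynomial σ K, T w = p ∧ (∀ v, (T v).IsHomogeneous D) ∧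
      ∀ v l, (∀ k, eval l (E k v) = 0) → eval l (T v) = 0 := by
  obtain ⟨q, hq⟩ := Finsupp.mem_ideal_span_range_iff_exists_finsupp.1 hpE
  let T := homogeneousComponent D ∘ₗ ∑ k ∈ q.support, LinearMap.mulLeft K (q k) ∘ₗ E k
  have T_apply (v : M) :
      T v = homogeneousComponent D (∑ k ∈ q.support, q k * E k v) := by simp [T]
  refine ⟨T, ?_, fun v => ?_, fun v l hl => ?_⟩
  · rw [T_apply, show ∑ k ∈ q.support, q k * E k w = p from hq,
      homogeneousComponent_of_mem hp, if_pos rfl]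
  · exact homogeneousComponent_isHomogeneous D _
  · rw [T_apply, map_sum, map_sum]
    refine Finset.sum_eq_zero fun k _ => ?_
    rw [homogeneousComponent_mul_of_isHomogeneous (hE k v)]
    split_ifs
    · rw [map_mul, hl k, mul_zero]
    · exact map_zero _

section Determinant

variable [Fintype σ] [DecidableEq σ]

theorem mem_finsuppAntidiag_univ_iff_degree_eq {β : σ →₀ ℕ} {D : ℕ} :
    β ∈ Finset.finsuppAntidiag Finset.univ D ↔ β.degree = D := by
  simp [Finset.mem_finsuppAntidiag, Finsupp.degree_eq_sum]

theorem eval_eq_sum_finsuppAntidiag {p : MvPolynomial σ K} {D : ℕ} (hp : p.IsHomogeneous D)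
    (l : σ → K) :
    eval l p = ∑ β ∈ Finset.finsuppAntidiag Finset.univ D, coeff β p * ∏ i, l i ^ β i := by
  rw [eval_eq']
  refine Finset.sum_subset (fun β hβ => ?_) fun β _ hβ => ?_
  · rw [mem_finsuppAntidiag_univ_iff_degree_eq]
    exact by_contra fun hdegree => mem_support_iff.1 hβ (hp.coeff_eq_zero hdegree)
  · rw [notMem_support_iff.1 hβ, zero_mul]

theorem det_coeff_eq_zero {D : ℕ}
    {p : Finset.finsuppAntidiag (Finset.univ : Finset σ) D → MvPolynomial σ K}
    (hp : ∀ α, (p α).IsHomogeneous D) {l : σ → K} (hl : l ≠ 0) (hpl : ∀ α, eval l (p α) = 0) :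
    (Matrix.of fun α β => coeff β.1 (p α)).det = 0 := by
  refine Matrix.exists_mulVec_eq_zero_iff.1 ⟨fun β => ∏ i, l i ^ β.1 i, ?_, ?_⟩
  · obtain ⟨i, hi⟩ := Function.ne_iff.1 hl
    refine Function.ne_iff.2 ⟨⟨Finsupp.single i D, by simp⟩, ?_⟩
    simp only [Finsupp.single_apply, pow_ite, pow_zero, Finset.prod_ite_eq, Finset.mem_univ]
    exact pow_ne_zero D hi
  · funext α
    rw [Pi.zero_apply, ← hpl α, eval_eq_sum_finsuppAntidiag (hp α), ← Finset.sum_coe_sort]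
    rfl

end Determinant

theorem exists_polyEval_eq_det {J : Type*} [Fintype J] [DecidableEq J]
    (A : Matrix J J (M →ₗ[K] K)) :
    ∃ p, ∀ v, polyEval K M p v = (Matrix.of fun i j => A i j v).det := by
  refine ⟨(Matrix.of fun i j => X (A i j)).det, fun v => ?_⟩
  rw [polyEval, RingHom.map_det]
  congr 1
  ext i j
  simp

theorem isClosed_setOf_exists_ne_zero_forall_eval_eq_zero [IsAlgClosed K] [TopologicalSpace M]
    [IsZariskiTopology K M] [Finite σ] {E : ι → M →ₗ[K] MvPolynomial σ K} {e : ι → ℕ}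
    (hE : ∀ k v, (E k v).IsHomogeneous (e k)) :
    IsClosed {v | ∃ l ≠ 0, ∀ k, eval l (E k v) = 0} := by
  classical
  cases nonempty_fintype σ
  refine isClosed_of_closure_subset fun w hw => ?_
  by_contra! hw_notMem
  obtain ⟨D, hD⟩ := exists_forall_monomial_mem_span (fun k => E k w) fun l hl => by
    by_contra hl0
    exact hw_notMem ⟨l, hl0, hl⟩
  have degree_eq (α : Finset.finsuppAntidiag (Finset.univ : Finset σ) D) : α.1.degree = D :=
    mem_finsuppAntidiag_univ_iff_degree_eq.1 α.2
  choose T T_w T_homogeneous eval_T using fun α =>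
    exists_linearMap_of_mem_span hE (isHomogeneous_monomial 1 (degree_eq α)) (hD α (degree_eq α))
  obtain ⟨p, hp⟩ := exists_polyEval_eq_det (Matrix.of fun α β => lcoeff K β.1 ∘ₗ T α)
  have p_mem : p ∈ zariskiIdeal K {v | ∃ l ≠ 0, ∀ k, eval l (E k v) = 0} := by
    refine mem_zariskiIdeal.2 fun v ⟨l, hl, hv⟩ => ?_
    rw [hp]
    exact det_coeff_eq_zero (fun α => T_homogeneous α v) hl fun α => eval_T α v l hv
  have polyEval_w : polyEval K M p w = 1 := by
    refine (hp w).trans ((congrArg Matrix.det ?_).trans Matrix.det_one)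
    ext α β
    rw [Matrix.of_apply, Matrix.of_apply, LinearMap.comp_apply, T_w, lcoeff_apply, coeff_monomial,
      Matrix.one_apply]
    exact if_congr Subtype.ext_iff.symm rfl rfl
  exact one_ne_zero (polyEval_w.symm.trans
    ((mem_closure_iff_forall_mem_zariskiIdeal K).1 hw p p_mem))

end Elimination

section LinearForm

variable {σ : Type*}

theorem dvd_aeval_X_sub_mul_sub (p : MvPolynomial σ K) (q : σ → MvPolynomial σ K)
    (F : MvPolynomial σ K) : p ∣ aeval (fun i => X i - q i * p) F - F := by
  let π := Ideal.Quotient.mkₐ K (Ideal.span {p})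
  have algHom_eq : π.comp (aeval fun i => X i - q i * p) = π := by
    ext i
    simp [π]
  rw [← Ideal.mem_span_singleton, ← Ideal.Quotient.eq]
  exact DFunLike.congr_fun algHom_eq F

instance finite_homogeneousSubmodule [Finite σ] (d : ℕ) :
    Module.Finite K (homogeneousSubmodule σ K d) := by
  rw [Module.Finite.iff_fg, ← homogeneousSubmodule_one_pow, homogeneousSubmodule_one_eq_span_X]
  exact (Submodule.fg_span (Set.finite_range _)).pow d

variable [Fintype σ]

/-- The linear form with the given coefficients. -/
def linearForm : (σ → K) →ₗ[K] MvPolynomial σ K :=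
  Fintype.linearCombination K X

theorem eval_linearForm (l v : σ → K) : eval v (linearForm l) = l ⬝ᵥ v := by
  simp [linearForm, Fintype.linearCombination_apply, dotProduct]

theorem range_linearForm : LinearMap.range linearForm = homogeneousSubmodule σ K 1 := by
  rw [homogeneousSubmodule_one_eq_span_X, linearForm, Fintype.range_linearCombination]

theorem isHomogeneous_linearForm (l : σ → K) : (linearForm l).IsHomogeneous 1 := by
  rw [← mem_homogeneousSubmodule, ← range_linearForm]
  exact LinearMap.mem_range_self _ l

theorem exists_linearForm_eq {L : MvPolynomial σ K} (hL : L.IsHomogeneous 1) :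
    ∃ l, linearForm l = L := by
  rwa [← mem_homogeneousSubmodule, ← range_linearForm] at hL

theorem linearForm_injective : Function.Injective (linearForm : (σ → K) → MvPolynomial σ K) := by
  intro l m hlm
  refine dotProduct_eq _ _ fun v => ?_
  rw [← eval_linearForm, hlm, eval_linearForm]

/-- The substitution of `(u · l) v - (v · l) u`, viewed as a point with coordinates linear in `l`,
into polynomials. As `u` and `v` vary, these points fill the hyperplane `l ⬝ᵥ x = 0`. -/
def hyperplaneSubst (u v : σ → K) : MvPolynomial σ K →ₐ[K] MvPolynomial σ K :=
  aeval fun i => v i • linearForm u - u i • linearForm v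

theorem isHomogeneous_hyperplaneSubst (u v : σ → K) {F : MvPolynomial σ K} {d : ℕ}
    (hF : F.IsHomogeneous d) : (hyperplaneSubst u v F).IsHomogeneous d := by
  have smul_homogeneous (c : K) (l : σ → K) : (c • linearForm l).IsHomogeneous 1 := by
    rw [← map_smul]
    exact isHomogeneous_linearForm _
  rw [← one_mul d]
  exact hF.aeval _ fun i => (smul_homogeneous _ u).sub (smul_homogeneous _ v)

theorem eval_hyperplaneSubst (u v l : σ → K) (F : MvPolynomial σ K) :
    eval l (hyperplaneSubst u v F) = eval ((u ⬝ᵥ l) • v - (v ⬝ᵥ l) • u) F := by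
  have algHom_eq : (aeval l).comp (hyperplaneSubst u v) =
      aeval ((u ⬝ᵥ l) • v - (v ⬝ᵥ l) • u) := by
    ext i
    simp [hyperplaneSubst, aeval_eq_eval, eval_linearForm, mul_comm]
  simpa [aeval_eq_eval] using DFunLike.congr_fun algHom_eq F

theorem linearForm_dvd_iff [Infinite K] {l : σ → K} (hl : l ≠ 0) {F : MvPolynomial σ K} :
    linearForm l ∣ F ↔ ∀ u v, eval l (hyperplaneSubst u v F) = 0 := by
  classical
  constructor
  · rintro ⟨G, rfl⟩ u v
    have dotProduct_eq_zero : l ⬝ᵥ ((u ⬝ᵥ l) • v - (v ⬝ᵥ l) • u) = 0 := by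
      rw [dotProduct_sub, dotProduct_smul, dotProduct_smul, dotProduct_comm l u,
        dotProduct_comm l v, smul_eq_mul, smul_eq_mul, mul_comm, sub_self]
    rw [eval_hyperplaneSubst, map_mul, eval_linearForm, dotProduct_eq_zero, zero_mul]
  · intro hF
    obtain ⟨i, hi⟩ := Function.ne_iff.1 hl
    let u : σ → K := Pi.single i (l i)⁻¹
    have u_dotProduct : u ⬝ᵥ l = 1 := by simpa [u] using inv_mul_cancel₀ hi
    -- `v - (v ⬝ᵥ l) • u` is the projection of `v` to the hyperplane `l = 0` along `u`
    have aeval_eq_zero : aeval (fun j => X j - C (u j) * linearForm l) F =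
        (0 : MvPolynomial σ K) := by
      refine MvPolynomial.funext fun v => ?_
      rw [map_zero, ← hF u v, eval_hyperplaneSubst, u_dotProduct, one_smul, ← aeval_eq_eval,
        ← aeval_eq_eval, comp_aeval_apply]
      congr 2
      funext j
      simp [aeval_eq_eval, eval_linearForm, dotProduct_comm l v, mul_comm]
    have dvd_sub := dvd_aeval_X_sub_mul_sub (linearForm l) (fun j => C (u j)) F
    rwa [aeval_eq_zero, zero_sub, dvd_neg] at dvd_sub

theorem exists_eq_linearForm_mul_linearForm {l : σ → K} {F : MvPolynomial σ K}
    (hF : F.IsHomogeneous 2) (hl : linearForm l ∣ F) : ∃ m, F = linearForm l * linearForm m := by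
  obtain ⟨G, rfl⟩ := hl
  obtain ⟨m, hm⟩ := exists_linearForm_eq (homogeneousComponent_isHomogeneous 1 G)
  refine ⟨m, ?_⟩
  have component_mul :=
    homogeneousComponent_mul_of_isHomogeneous (isHomogeneous_linearForm l) G 2
  rwa [mul_comm G, homogeneousComponent_of_mem hF, if_pos rfl, if_pos one_le_two, ← hm,
    mul_comm _ (linearForm l)] at component_mul

/-- The product of two linear forms, as a bilinear map to quadratic forms. -/
def linearFormMul : (σ → K) →ₗ[K] (σ → K) →ₗ[K] homogeneousSubmodule σ K 2 :=
  LinearMap.mk₂ K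
    (fun l m => ⟨linearForm l * linearForm m,
      (isHomogeneous_linearForm l).mul (isHomogeneous_linearForm m)⟩)
    (fun _ _ _ => Subtype.ext (by simp [add_mul]))
    (fun _ _ _ => Subtype.ext (by simp))
    (fun _ _ _ => Subtype.ext (by simp [mul_add]))
    (fun _ _ _ => Subtype.ext (by simp))

end LinearForm

section Algebraicity

variable {A : Type*} [CommRing A] [Algebra K A] {S : Subalgebra K A}

theorem isIntegral_of_add_mem_of_mul_mem {x y : A} (hadd : x + y ∈ S) (hmul : x * y ∈ S) :
    IsIntegral S x := by
  refine ⟨Polynomial.X ^ 2 - Polynomial.C ⟨_, hadd⟩ * Polynomial.X + Polynomial.C ⟨_, hmul⟩,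
    by monicity!, ?_⟩
  simp only [Polynomial.eval₂_add, Polynomial.eval₂_sub, Polynomial.eval₂_mul,
    Polynomial.eval₂_pow, Polynomial.eval₂_X, Polynomial.eval₂_C, Subalgebra.algebraMap_mk,
    Algebra.algebraMap_self, RingHom.id_apply]
  ring

theorem isAlgebraic_of_forall_sum_smul_mul_sum_smul_mem [IsDomain A] {ι : Type*} [Fintype ι]
    {l b : ι → A} {i₀ : ι} (hl : l i₀ = 1) (hb : b i₀ ≠ 0)
    (hlb : ∀ v : ι → K, (∑ j, v j • l j) * ∑ j, v j • b j ∈ S) (j : ι) :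
    IsAlgebraic S (l j) ∧ IsAlgebraic S (b j) := by
  classical
  have b_mem : b i₀ ∈ S := by simpa [Pi.single_apply, hl] using hlb (Pi.single i₀ 1)
  have mul_mem : l j * b j ∈ S := by simpa [Pi.single_apply] using hlb (Pi.single j 1)
  have sum_mem : (1 + l j) * (b i₀ + b j) ∈ S := by
    have prod_mem := hlb (Pi.single i₀ 1 + Pi.single j 1)
    simp only [Pi.add_apply] at prod_mem
    simpa [Pi.single_apply, add_smul, Finset.sum_add_distrib, hl] using prod_mem
  -- `l j * b i₀` and `b j` are the roots of a monic quadratic polynomial over `S`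
  have roots_add_mem : l j * b i₀ + b j ∈ S := by
    convert S.sub_mem (S.sub_mem sum_mem mul_mem) b_mem using 1
    ring
  have roots_mul_mem : l j * b i₀ * b j ∈ S := by
    convert S.mul_mem mul_mem b_mem using 1
    ring
  have mul_isAlgebraic : IsAlgebraic S (l j * b i₀) :=
    (isIntegral_of_add_mem_of_mul_mem roots_add_mem roots_mul_mem).isAlgebraic
  have b_isAlgebraic : IsAlgebraic S (b j) :=
    (isIntegral_of_add_mem_of_mul_mem (add_comm _ (b j) ▸ roots_add_mem)
      (mul_comm _ (b j) ▸ roots_mul_mem)).isAlgebraic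
  refine ⟨?_, b_isAlgebraic⟩
  rw [mul_comm] at mul_isAlgebraic
  exact IsAlgebraic.of_mul (mem_nonZeroDivisors_of_ne_zero hb)
    (isAlgebraic_algebraMap (⟨b i₀, b_mem⟩ : S)) mul_isAlgebraic

end Algebraicity

section CommonFactorLocus

instance isZariskiTopology_pairSpace (r : ℕ) : IsZariskiTopology K (pairSpace K r) :=
  ⟨rfl⟩

variable (K) in
/-- The set of pairs of quadratic forms in `x_0, …, x_r` with a common nonzero linear factor. -/
def commonFactorLocus (r : ℕ) : Set (pairSpace K r) :=
  {F | ∃ L : MvPolynomial (Fin (r + 1)) K, L.IsHomogeneous 1 ∧ L ≠ 0 ∧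
    L ∣ (F.1 : MvPolynomial (Fin (r + 1)) K) ∧ L ∣ (F.2 : MvPolynomial (Fin (r + 1)) K)}

variable {r : ℕ}

theorem mem_commonFactorLocus {F : pairSpace K r} :
    F ∈ commonFactorLocus K r ↔ ∃ l ≠ 0, linearForm l ∣ (F.1 : MvPolynomial (Fin (r + 1)) K) ∧
      linearForm l ∣ (F.2 : MvPolynomial (Fin (r + 1)) K) := by
  constructor
  · rintro ⟨L, hL, hL0, hLF⟩
    obtain ⟨l, rfl⟩ := exists_linearForm_eq hL
    exact ⟨l, fun hl => hL0 (by rw [hl, map_zero]), hLF⟩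
  · rintro ⟨l, hl, hlF⟩
    exact ⟨linearForm l, isHomogeneous_linearForm l,
      (map_ne_zero_iff _ linearForm_injective).2 hl, hlF⟩

variable (K r) in
theorem isClosed_commonFactorLocus [IsAlgClosed K] : IsClosed (commonFactorLocus K r) := by
  have : Infinite K := IsAlgClosed.instInfinite
  let restrict (u : (Fin (r + 1) → K) × (Fin (r + 1) → K)) :
      homogeneousSubmodule (Fin (r + 1)) K 2 →ₗ[K] MvPolynomial (Fin (r + 1)) K :=
    (hyperplaneSubst u.1 u.2).toLinearMap ∘ₗ Submodule.subtype _
  let E := Sum.elim (fun u => restrict u ∘ₗ LinearMap.fst K _ _)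
    (fun u => restrict u ∘ₗ LinearMap.snd K _ _)
  have hE : ∀ k (F : pairSpace K r), (E k F).IsHomogeneous 2 := by
    rintro (u | u) F
    · exact isHomogeneous_hyperplaneSubst u.1 u.2 F.1.2
    · exact isHomogeneous_hyperplaneSubst u.1 u.2 F.2.2
  convert isClosed_setOf_exists_ne_zero_forall_eval_eq_zero (E := E) hE using 1
  ext F
  rw [mem_commonFactorLocus, Set.mem_ofPred_eq]
  refine exists_congr fun l => and_congr_right fun hl => ?_
  rw [linearForm_dvd_iff hl, linearForm_dvd_iff hl, Sum.forall, Prod.forall, Prod.forall]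
  rfl

/-- Evaluation of forms of degree `d` at the point `v`. -/
def evalForm {σ : Type*} {d : ℕ} (v : σ → K) : homogeneousSubmodule σ K d →ₗ[K] K :=
  (aeval v).toLinearMap ∘ₗ Submodule.subtype _

theorem evalForm_linearFormMul {σ : Type*} [Fintype σ] (v l m : σ → K) :
    evalForm v (linearFormMul l m) = (l ⬝ᵥ v) * (m ⬝ᵥ v) := by
  rw [← eval_linearForm, ← eval_linearForm, ← map_mul]
  exact congrFun (congrArg DFunLike.coe (coe_aeval_eq_eval v)) _

/-- Index set for the coordinates of the triples `(l, b, c)` of linear forms in `x_0, …, x_r` such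
that `l` has leading coefficient `1`. -/
abbrev ChartIndex (r : ℕ) : Type :=
  Fin r ⊕ Fin (r + 1) ⊕ Fin (r + 1)

/-- The coefficients of the common factor `l`, normalized to have leading coefficient `1`. -/
def factorCoeff {R : Type*} [One R] (s : ChartIndex r → R) : Fin (r + 1) → R :=
  Fin.cons 1 fun i => s (.inl i)

theorem eval_factorCoeff_X (s : ChartIndex r → K) (j : Fin (r + 1)) :
    eval s (factorCoeff X j) = factorCoeff s j := by
  cases j using Fin.cases <;> simp [factorCoeff]

/-- The parametrization `(l, b, c) ↦ (l * b, l * c)` of pairs of quadratic forms whose common linear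
factor `l` has leading coefficient `1`. -/
def commonFactorChart (s : ChartIndex r → K) : pairSpace K r :=
  (linearFormMul (factorCoeff s) fun j => s (.inr (.inl j)),
    linearFormMul (factorCoeff s) fun j => s (.inr (.inr j)))

variable (K r) in
theorem isPolynomialMap_commonFactorChart :
    IsPolynomialMap (commonFactorChart : (ChartIndex r → K) → pairSpace K r) := by
  have factor_isPolynomialMap :
      IsPolynomialMap (factorCoeff : (ChartIndex r → K) → Fin (r + 1) → K) := by
    simpa only [eval_factorCoeff_X] using
      IsPolynomialMap.eval_pi (factorCoeff (X : ChartIndex r → MvPolynomial (ChartIndex r) K))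
  have coordinates_isPolynomialMap (ι : Fin (r + 1) → ChartIndex r) :
      IsPolynomialMap fun (s : ChartIndex r → K) j => s (ι j) := by
    simpa only [eval_X] using
      IsPolynomialMap.eval_pi fun j => (X (ι j) : MvPolynomial (ChartIndex r) K)
  exact (factor_isPolynomialMap.bilinear (coordinates_isPolynomialMap _) linearFormMul).prodMk
    (factor_isPolynomialMap.bilinear (coordinates_isPolynomialMap _) linearFormMul)

theorem range_commonFactorChart_subset :
    Set.range (commonFactorChart : (ChartIndex r → K) → _) ⊆ commonFactorLocus K r := by
  rintro _ ⟨s, rfl⟩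
  refine mem_commonFactorLocus.2 ⟨factorCoeff s, fun h => ?_, dvd_mul_right _ _, dvd_mul_right _ _⟩
  exact one_ne_zero (congrFun h 0)

theorem mem_range_commonFactorChart {a : Fin (r + 1) → K} (ha : a 0 ≠ 0) (b c : Fin (r + 1) → K) :
    (linearFormMul a b, linearFormMul a c) ∈ Set.range commonFactorChart := by
  refine ⟨Sum.elim (fun i => (a 0)⁻¹ * a i.succ) (Sum.elim (a 0 • b) (a 0 • c)), ?_⟩
  have factorCoeff_eq : factorCoeff (Sum.elim (fun i => (a 0)⁻¹ * a i.succ)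
      (Sum.elim (a 0 • b) (a 0 • c))) = (a 0)⁻¹ • a := by
    ext j
    cases j using Fin.cases <;> simp [factorCoeff, ha]
  have rescale (m : Fin (r + 1) → K) :
      linearFormMul ((a 0)⁻¹ • a) (a 0 • m) = linearFormMul a m := by
    rw [map_smul, map_smul, LinearMap.smul_apply, smul_smul, mul_inv_cancel₀ ha, one_smul]
  rw [commonFactorChart, factorCoeff_eq]
  exact Prod.ext (rescale b) (rescale c)

theorem isPolynomialMap_linearFormMul_left (b c : Fin (r + 1) → K) :
    IsPolynomialMap fun a => ((linearFormMul a b, linearFormMul a c) : pairSpace K r) := by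
  have mul_isPolynomialMap (m : Fin (r + 1) → K) :
      IsPolynomialMap fun a => linearFormMul a m := by
    simpa only [eval_X, eval_C] using
      (IsPolynomialMap.eval_pi (X : Fin (r + 1) → MvPolynomial (Fin (r + 1)) K)).bilinear
        (IsPolynomialMap.eval_pi fun j => C (m j)) linearFormMul
  exact (mul_isPolynomialMap b).prodMk (mul_isPolynomialMap c)

theorem commonFactorLocus_subset_closure [Infinite K] :
    commonFactorLocus K r ⊆ closure (Set.range commonFactorChart) := by
  rintro ⟨F, G⟩ hFG
  obtain ⟨l, -, hlF, hlG⟩ := mem_commonFactorLocus.1 hFG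
  obtain ⟨b, hb⟩ := exists_eq_linearForm_mul_linearForm F.2 hlF
  obtain ⟨c, hc⟩ := exists_eq_linearForm_mul_linearForm G.2 hlG
  obtain rfl : F = linearFormMul l b := Subtype.ext hb
  obtain rfl : G = linearFormMul l c := Subtype.ext hc
  exact (isPolynomialMap_linearFormMul_left b c).mem_closure_of_forall_eval_ne_zero (X_ne_zero 0)
    (fun a ha => mem_range_commonFactorChart (by rwa [eval_X] at ha) b c) l

variable (K r) in
theorem closure_range_commonFactorChart [IsAlgClosed K] :
    closure (Set.range commonFactorChart) = commonFactorLocus K r :=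
  have : Infinite K := IsAlgClosed.instInfinite
  (closure_minimal range_commonFactorChart_subset (isClosed_commonFactorLocus K r)).antisymm
    commonFactorLocus_subset_closure

theorem factorCoeff_mul_mem_range_comorphism [Infinite K] {ι : Fin (r + 1) → ChartIndex r}
    {π : pairSpace K r →ₗ[K] homogeneousSubmodule (Fin (r + 1)) K 2}
    (hπ : ∀ s, π (commonFactorChart s) = linearFormMul (factorCoeff s) fun j => s (ι j))
    (v : Fin (r + 1) → K) :
    (∑ j, v j • factorCoeff X j) * ∑ j, v j • X (ι j) ∈
      (isPolynomialMap_commonFactorChart K r).comorphism.range := by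
  refine (isPolynomialMap_commonFactorChart K r).mem_range_comorphism (φ := evalForm v ∘ₗ π)
    fun s => ?_
  rw [LinearMap.comp_apply, hπ, evalForm_linearFormMul]
  simp [eval_factorCoeff_X, dotProduct, mul_comm]

variable (K r) in
theorem isAlgebraic_range_comorphism_commonFactorChart [Infinite K] :
    Algebra.IsAlgebraic (isPolynomialMap_commonFactorChart K r).comorphism.range
      (MvPolynomial (ChartIndex r) K) := by
  have algebraic_of_projection {ι : Fin (r + 1) → ChartIndex r}
      {π : pairSpace K r →ₗ[K] homogeneousSubmodule (Fin (r + 1)) K 2}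
      (hπ : ∀ s, π (commonFactorChart s) = linearFormMul (factorCoeff s) fun j => s (ι j)) :=
    isAlgebraic_of_forall_sum_smul_mul_sum_smul_mem (i₀ := 0) rfl (X_ne_zero (ι 0))
      (factorCoeff_mul_mem_range_comorphism hπ)
  have algebraic_fst := algebraic_of_projection (π := LinearMap.fst K _ _) fun _ => rfl
  have algebraic_snd := algebraic_of_projection (π := LinearMap.snd K _ _) fun _ => rfl
  refine isAlgebraic_mvPolynomial_of_forall_X _ ?_
  rintro (i | j | j)
  · exact (algebraic_fst i.succ).1
  · exact (algebraic_fst j).2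
  · exact (algebraic_snd j).2

theorem card_chartIndex (r : ℕ) :
    Fintype.card (ChartIndex r) = 2 * (r + 2).choose 2 - r ^ 2 := by
  have two_mul_choose : 2 * (r + 2).choose 2 = (r + 2) * (r + 1) := by
    rw [Nat.choose_two_right]
    exact Nat.mul_div_cancel' (Nat.even_mul_pred_self (r + 2)).two_dvd
  rw [two_mul_choose, show (r + 2) * (r + 1) = r + (r + 1 + (r + 1)) + r ^ 2 by ring,
    Nat.add_sub_cancel_right]
  simp

end CommonFactorLocus

variable (K)

theorem statement12_general [IsAlgClosed K] (r : ℕ) :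
    IsClosed (commonFactorLocus K r) ∧ IsIrreducible (commonFactorLocus K r) ∧
      dimSet (commonFactorLocus K r) =
        ((2 * Nat.choose (r + 2) 2 - r ^ 2 : ℕ) : WithBot ℕ∞) := by
  have : Infinite K := IsAlgClosed.instInfinite
  have := isAlgebraic_range_comorphism_commonFactorChart K r
  have chart_polynomial := isPolynomialMap_commonFactorChart K r
  refine ⟨isClosed_commonFactorLocus K r, ?_, ?_⟩
  · rw [← closure_range_commonFactorChart, isIrreducible_iff_closure]
    exact chart_polynomial.isIrreducible_range
  · rw [← closure_range_commonFactorChart, dimSet, closure_closure, ← dimSet,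
      chart_polynomial.dimSet_range, card_chartIndex]

/-- Over an algebraically closed field and for `r ≥ 2`, the set `A` of
pairs `(F₁, F₂)` of quadratic forms divisible by a common nonzero linear form (equivalently,
both vanishing on a common hyperplane of `ℙ^r`) is a Zariski closed irreducible subset of
codimension `r²` in `W_{r,2} × W_{r,2}`, i.e. of dimension `2·C(r+2,2) - r²`. -/
theorem statement12 [IsAlgClosed K] (r : ℕ) (hr : 2 ≤ r)
    (A : Set (pairSpace K r))
    (hA : A = {F | ∃ L : MvPolynomial (Fin (r + 1)) K, L.IsHomogeneous 1 ∧ L ≠ 0 ∧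
      L ∣ (F.1 : MvPolynomial (Fin (r + 1)) K) ∧ L ∣ (F.2 : MvPolynomial (Fin (r + 1)) K)}) :
    IsClosed A ∧ IsIrreducible A ∧
      dimSet A = ((2 * Nat.choose (r + 2) 2 - r ^ 2 : ℕ) : WithBot ℕ∞) := by
  subst hA
  exact statement12_general K r

end Statement12
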